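/- arXiv:2402.01436 — 2 statements merged into one kernel-verified Lean document; each statement's English description precedes it below -/
import Mathlib

section
/- For a weakly decreasing sequence of nonnegative integers λ_1 ≥ λ_2 ≥ ... ≥ λ_n ≥ 0, the product over 1 ≤ i < j ≤ n of (λ_i - λ_j + j - i)/(j - i) equals the determinant of the n×n matrix whose (i,j)-entry is the binomial coefficient C(λ_i + n - i, n - j). -/
/-!
With `w i = x i + n - 1 - i` the matrix entries are `choose (w i) (n - 1 - j)`, and
`k! * choose t k` is the value at `t` of the `k`-th falling factorial, a monic polynomial of
degree `k`. Hence column operations turn the determinant, multiplied by `∏ k!`, into a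
Vandermonde determinant with its columns in reverse order, which equals `∏ (w i - w j)` over
`i < j`. The denominators of the Weyl dimension formula multiply to the same `∏ k!`.
-/

open Finset Matrix Polynomial

lemma cast_add_sub_one_sub_val {R : Type*} [AddGroupWithOne R] {n : ℕ} (m : ℕ) (i : Fin n) :
    ((m + n - 1 - (i : ℕ) : ℕ) : R) = (m : R) + n - 1 - (i : ℕ) := by
  have := i.isLt
  rw [Nat.cast_sub (by lia), Nat.cast_sub (by lia), Nat.cast_add, Nat.cast_one]

section CommRing

variable {R : Type*} [CommRing R]

lemma prod_prod_Ioi_val_sub_val (n : ℕ) :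
    ∏ i : Fin n, ∏ j ∈ Ioi i, (((j : ℕ) : R) - ((i : ℕ) : R)) =
      ∏ k : Fin n, ((k : ℕ).factorial : R) := by
  cases n with
  | zero => rfl
  | succ n =>
    rw [← det_vandermonde fun i : Fin (n + 1) ↦ ((i : ℕ) : R), det_vandermonde_id_eq_superFactorial,
      Fin.prod_univ_eq_prod_range fun k ↦ (k.factorial : R), ← Nat.cast_prod,
      Nat.prod_range_succ_factorial]

lemma det_vandermonde_submatrix_revPerm {n : ℕ} (v : Fin n → R) :
    ((vandermonde v).submatrix id Fin.revPerm).det = ∏ i, ∏ j ∈ Ioi i, (v i - v j) := by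
  have proj : (vandermonde v).submatrix id Fin.revPerm = projVandermonde 1 v := by
    ext i j
    simp [projVandermonde_apply]
  simp [proj, det_projVandermonde]

variable [BinomialRing R]

lemma eval_descPochhammer_eq_factorial_mul_choose (r : R) (k : ℕ) :
    (descPochhammer R k).eval r = (k.factorial : R) * Ring.choose r k := by
  rw [← nsmul_eq_mul, ← Ring.descPochhammer_eq_factorial_smul_choose,
    ← descPochhammer_map (Int.castRingHom R), eval_map, ← aeval_eq_smeval, aeval_def,
    algebraMap_int_eq]

lemma prod_factorial_mul_det_choose {n : ℕ} (v : Fin n → R) :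
    (∏ k : Fin n, ((k : ℕ).factorial : R)) *
        (of fun i j : Fin n ↦ Ring.choose (v i) (j : ℕ)).det = (vandermonde v).det := by
  nontriviality R
  have monic (k : ℕ) : (descPochhammer R k).Monic := by
    simpa using (monic_descPochhammer ℤ k).map (Int.castRingHom R)
  have natDegree (k : ℕ) : (descPochhammer R k).natDegree = k := by
    rw [← descPochhammer_map (Int.castRingHom R), (monic_descPochhammer ℤ k).natDegree_map,
      descPochhammer_natDegree]
  rw [det_eval_matrixOfPolynomials_eq_det_vandermonde v (fun k ↦ descPochhammer R k)
    (fun k ↦ natDegree k) (fun k ↦ monic k)]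
  simp only [eval_descPochhammer_eq_factorial_mul_choose]
  exact (det_mul_row _ _).symm

lemma prod_factorial_mul_det_choose_rev {n : ℕ} (v : Fin n → R) :
    (∏ k : Fin n, ((k : ℕ).factorial : R)) *
        (of fun i j : Fin n ↦ Ring.choose (v i) (j.rev : ℕ)).det =
      ∏ i, ∏ j ∈ Ioi i, (v i - v j) := by
  have rev_columns : (of fun i j : Fin n ↦ Ring.choose (v i) (j.rev : ℕ)) =
      (of fun i j : Fin n ↦ Ring.choose (v i) (j : ℕ)).submatrix id Fin.revPerm := rfl
  rw [rev_columns, det_permute', mul_left_comm, prod_factorial_mul_det_choose, ← det_permute',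
    det_vandermonde_submatrix_revPerm]

end CommRing

theorem weyl_dim_gl_det_general {K : Type*} [Field K] [CharZero K] {n : ℕ} (x : Fin n → K) :
    ∏ i : Fin n, ∏ j ∈ Ioi i,
        ((x i - x j + (j : ℕ) - (i : ℕ)) / (((j : ℕ) : K) - ((i : ℕ) : K))) =
      (of fun i j : Fin n ↦ Ring.choose (x i + n - 1 - (i : ℕ)) (n - 1 - (j : ℕ))).det := by
  have factorial_ne_zero : ∏ k : Fin n, ((k : ℕ).factorial : K) ≠ 0 :=
    prod_ne_zero_iff.mpr fun k _ ↦ Nat.cast_ne_zero.mpr (k : ℕ).factorial_ne_zero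
  have val_rev (j : Fin n) : n - 1 - (j : ℕ) = j.rev := by
    rw [Fin.val_rev, Nat.sub_sub, add_comm]
  have shift_sub_shift (i j : Fin n) : x i - x j + (j : ℕ) - (i : ℕ) =
      (x i + n - 1 - (i : ℕ)) - (x j + n - 1 - (j : ℕ)) := by ring
  simp only [prod_div_distrib, val_rev]
  rw [prod_prod_Ioi_val_sub_val, div_eq_iff factorial_ne_zero, mul_comm,
    prod_factorial_mul_det_choose_rev]
  simp only [shift_sub_shift]

theorem weyl_dim_gl_det (n : ℕ) (lam : Fin n → ℕ)
    (hdec : ∀ i j : Fin n, i ≤ j → lam j ≤ lam i) :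
    (∏ i : Fin n, ∏ j ∈ Finset.Ioi i,
        (((lam i : ℚ) - (lam j : ℚ) + (j : ℕ) - (i : ℕ)) / (((j : ℕ) : ℚ) - ((i : ℕ) : ℚ)))) =
    Matrix.det (Matrix.of fun i j : Fin n =>
      ((lam i + n - 1 - (i : ℕ)).choose (n - 1 - (j : ℕ)) : ℚ)) := by
  simp only [weyl_dim_gl_det_general fun i ↦ (lam i : ℚ), ← cast_add_sub_one_sub_val,
    Ring.choose_natCast]
end

section
/- Let λ_1 ≥ ... ≥ λ_n ≥ 0 and μ_1 ≥ ... ≥ μ_m ≥ 0 be integers with m ≤ n - 1, and set λ_{n+i} = 0 and μ_{m+i} = 0 for i ≥ 1, u_{ij} = λ_i - μ_j + j - i. Define the n×n matrix M by M_{ij} = {u_{ij} + n - m - 1 choose n - m - 1} if u_{ij} ≥ 0 and 1 ≤ j ≤ m (and 0 if u_{ij} < 0), and M_{ij} = C(u_{ij} + n - j, n - j) for m+1 ≤ j ≤ n. Then det(M) is nonzero if and only if λ_i ≥ μ_i ≥ λ_{i+n-m} for all 1 ≤ i ≤ m. -/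
/-- Generalized binomial coefficient `C(x,k) = x(x-1)⋯(x-k+1)/k!`. -/
def gchoose (x : ℚ) (k : ℕ) : ℚ :=
  (∏ i ∈ Finset.range k, (x - i)) / (Nat.factorial k)

/-- `u lam mu i j = λ_i - μ_j + j - i` (with 1-based indices `i, j`). -/
def uent (lam mu : ℕ → ℤ) (i j : ℕ) : ℤ := lam i - mu j + (j : ℤ) - (i : ℤ)

/-!
The determinant counts Gelfand–Tsetlin patterns. All entries are polynomial or truncated polynomial
functions of `u_{ij}` whose backward differences are the entries of the matrix for `n - 1`. The last
column is constant, so subtracting consecutive rows and telescoping writes the determinant for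
`(λ, μ)` as the sum, over all `ν` of length `n - 1` interlacing `λ`, of the determinants for
`(ν, μ)`. For `n = m` the matrix has entries `1` where `λ_i - i = μ_j - j` and `0` elsewhere, and
its determinant is `1` if `λ = μ` and `0` otherwise. Hence the determinant is the number of
interlacing chains from `λ` to `μ`, and such a chain exists exactly when `λ_{i+n-m} ≤ μ_i ≤ λ_i` for
all `i`.
-/

open Finset Matrix

lemma gchoose_eq_choose (x : ℚ) (k : ℕ) : gchoose x k = Ring.choose x k := by
  rw [Ring.choose_eq_smul, ← Polynomial.aeval_eq_smeval, Polynomial.aeval_def,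
    ← Polynomial.eval_map, descPochhammer_map, descPochhammer_eval_eq_prod_range, smul_eq_mul,
    gchoose, div_eq_inv_mul]

lemma gchoose_intCast (x : ℤ) (k : ℕ) : gchoose x k = (Ring.choose x k : ℤ) := by
  rw [gchoose_eq_choose]
  exact (Ring.map_choose (Int.castRingHom ℚ) x k).symm

lemma sum_Icc_int_sub_pred {M : Type*} [AddCommGroup M] (f : ℤ → M) {a b : ℤ} (hab : a ≤ b + 1) :
    ∑ x ∈ Icc a b, (f x - f (x - 1)) = f b - f (a - 1) := by
  obtain ⟨t, rfl⟩ : ∃ t : ℕ, b = a - 1 + t := ⟨(b + 1 - a).toNat, by lia⟩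
  clear hab
  induction t with
  | zero => simp
  | succ t ih =>
    have hIcc : Icc a (a - 1 + (t + 1 : ℕ)) = insert (a - 1 + t + 1) (Icc a (a - 1 + t)) := by
      rw [insert_Icc_right_eq_Icc_add_one (by lia), Nat.cast_succ, add_assoc]
    rw [hIcc, sum_insert (by simp), ih, add_sub_cancel_right, sub_add_sub_cancel, Nat.cast_succ,
      add_assoc]

section Determinants

variable {R : Type*} [CommRing R]

lemma det_eq_det_sub_succ_of_last_col_eq_one {n : ℕ} (A : Matrix (Fin (n + 1)) (Fin (n + 1)) R)
    (hA : ∀ i, A i (Fin.last n) = 1) :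
    A.det = (of fun i j : Fin n ↦ A i.castSucc j.castSucc - A i.succ j.castSucc).det := by
  set D : Matrix (Fin n) (Fin n) R := of fun i j ↦ A i.castSucc j.castSucc - A i.succ j.castSucc
  let B : Matrix (Fin (n + 1)) (Fin (n + 1)) R :=
    of (Fin.cons (A 0) fun i j ↦ A i.succ j - A i.castSucc j)
  have hAB : A.det = B.det :=
    det_eq_of_forall_row_eq_smul_add_pred 1 (fun j ↦ rfl) fun i j ↦ by simp [B]
  have hBD : B.submatrix Fin.succ Fin.castSucc = -D := by
    ext i j
    simp [B, D]
  have hB_succ (i : Fin n) : B i.succ (Fin.last n) = 0 := by simp [B, hA]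
  have hB_zero : B 0 (Fin.last n) = 1 := hA 0
  calc A.det = (-1) ^ n * (-D).det := by
        rw [hAB, det_succ_column B (Fin.last n), Fin.sum_univ_succ]
        simp [hB_succ, hB_zero, hBD]
    _ = D.det := by
        rw [det_neg, Fintype.card_fin, ← mul_assoc, ← pow_add, Even.neg_one_pow ⟨n, rfl⟩, one_mul]

lemma det_of_sum_eq_sum_piFinset {ι α : Type*} [Fintype ι] [DecidableEq ι] (s : ι → Finset α)
    (f : ι → α → ι → R) :
    (of fun i j ↦ ∑ x ∈ s i, f i x j).det =
      ∑ x ∈ Fintype.piFinset s, (of fun i j ↦ f i (x i) j).det := by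
  have hrows : (fun i j ↦ ∑ x ∈ s i, f i x j) = fun i ↦ ∑ x ∈ s i, f i x := by
    ext i j
    simp
  rw [hrows]
  exact (detRowAlternating (R := R) (n := ι)).toMultilinearMap.map_sum_finset f s

lemma det_ite_eq_of_strictMono {ι α : Type*} [Fintype ι] [LinearOrder ι] [Preorder α]
    [DecidableEq α] {a b : ι → α} (ha : StrictMono a) (hb : StrictMono b) :
    (of fun i j ↦ if a i = b j then (1 : R) else 0).det = if a = b then 1 else 0 := by
  by_cases hsub : Set.range a ⊆ Set.range b
  · have hrange : Set.range a = Set.range b := Set.eq_of_subset_of_ncard_le hsub <| by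
      simp [Set.ncard_range_of_injective, ha.injective, hb.injective]
    obtain rfl : a = b := (ha.range_inj hb).1 hrange
    rw [if_pos rfl, ← det_one (n := ι)]
    congr 1
    ext i j
    simp [one_apply, ha.injective.eq_iff]
  · obtain ⟨i, hi⟩ : ∃ i, a i ∉ Set.range b := by
      simpa [Set.range_subset_iff] using hsub
    rw [if_neg fun hab ↦ hsub (congrArg Set.range hab).subset]
    exact det_eq_zero_of_row_eq_zero i fun j ↦ if_neg fun hij ↦ hi ⟨j, hij.symm⟩

end Determinants

/-- The number of chains of integer vectors of lengths `m + k, m + k - 1, …, m` that start at `lam`,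
end at `mu`, and in which each vector interlaces its predecessor (Gelfand–Tsetlin patterns). For
weakly decreasing `lam` and `mu`, the branching rule for `GL(n - 1) ⊂ GL(n)` identifies it with the
multiplicity of the `GL(m)`-module of highest weight `mu` in the `GL(m + k)`-module of highest
weight `lam`. -/
noncomputable def branchingMultiplicity {m : ℕ} (mu : Fin m → ℤ) : (k : ℕ) → (Fin (m + k) → ℤ) → ℕ
  | 0, lam => if lam = mu then 1 else 0
  | k + 1, lam => ∑ nu ∈ Icc (Fin.tail lam) (Fin.init lam), branchingMultiplicity mu k nu

lemma antitone_of_tail_le_of_le_init {α : Type*} [Preorder α] {n : ℕ} {lam : Fin (n + 1) → α}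
    {nu : Fin n → α} (htail : Fin.tail lam ≤ nu) (hinit : nu ≤ Fin.init lam) : Antitone nu := by
  cases n with
  | zero => exact Subsingleton.antitone nu
  | succ n => exact Fin.antitone_iff_succ_le.2 fun i ↦ (hinit i.succ).trans (htail i.castSucc)

/-- The vector `mu` of length `m` interlaces `lam` of length `m + k` with gap `k`; in 1-based
indices, `λ_{i+k} ≤ μ_i ≤ λ_i` for `1 ≤ i ≤ m`. -/
def InterlacesWithGap {α : Type*} [LE α] {m : ℕ} (k : ℕ) (lam : Fin (m + k) → α)
    (mu : Fin m → α) : Prop :=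
  ∀ i, lam (i.addNat k) ≤ mu i ∧ mu i ≤ lam (i.castAdd k)

lemma interlacesWithGap_zero {α : Type*} [PartialOrder α] {m : ℕ} {lam mu : Fin m → α} :
    InterlacesWithGap 0 lam mu ↔ lam = mu := by
  simp only [InterlacesWithGap, le_antisymm_iff, Pi.le_def, ← forall_and]
  rfl

lemma interlacesWithGap_succ_iff_exists {α : Type*} [SemilatticeSup α] {m k : ℕ}
    {lam : Fin (m + k + 1) → α} {mu : Fin m → α} (hlam : Antitone lam) (hmu : Antitone mu) :
    InterlacesWithGap (k + 1) lam mu ↔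
      ∃ nu, Fin.tail lam ≤ nu ∧ nu ≤ Fin.init lam ∧ InterlacesWithGap k nu mu := by
  constructor
  · intro h
    -- the least vector that interlaces `lam` and dominates `mu` entrywise
    let nu : Fin (m + k) → α := fun i ↦
      if hi : (i : ℕ) < m then lam i.succ ⊔ mu ⟨i, hi⟩ else lam i.succ
    have htail : Fin.tail lam ≤ nu := fun i ↦ by
      dsimp only [nu]
      split_ifs
      exacts [le_sup_left, le_rfl]
    have hinit : nu ≤ Fin.init lam := fun i ↦ by
      dsimp only [nu]
      split_ifs with hi
      exacts [sup_le (hlam i.castSucc_le_succ) (h ⟨i, hi⟩).2, hlam i.castSucc_le_succ]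
    refine ⟨nu, htail, hinit, fun i ↦ ⟨?_, ?_⟩⟩
    · dsimp only [nu]
      split_ifs
      exacts [sup_le (h i).1 (hmu <| Fin.le_def.2 <| Nat.le_add_right i k), (h i).1]
    · simp [nu]
  · rintro ⟨nu, htail, hinit, h⟩ i
    exact ⟨(htail (i.addNat k)).trans (h i).1, (h i).2.trans (hinit (i.castAdd k))⟩

lemma branchingMultiplicity_pos_iff {m : ℕ} {mu : Fin m → ℤ} (hmu : Antitone mu) (k : ℕ)
    {lam : Fin (m + k) → ℤ} (hlam : Antitone lam) :
    0 < branchingMultiplicity mu k lam ↔ InterlacesWithGap k lam mu := by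
  induction k with
  | zero =>
    rw [interlacesWithGap_zero, branchingMultiplicity, Nat.pos_iff_ne_zero]
    simp
  | succ k ih =>
    rw [interlacesWithGap_succ_iff_exists hlam hmu, branchingMultiplicity, sum_pos_iff]
    refine exists_congr fun nu ↦ ?_
    rw [mem_Icc, and_assoc]
    refine and_congr_right fun htail ↦ and_congr_right fun hinit ↦ ?_
    exact ih (antitone_of_tail_le_of_le_init htail hinit)

lemma interlacesWithGap_iff_forall_one_le {α : Type*} [LE α] {m k : ℕ} {lam mu : ℕ → α} :
    InterlacesWithGap k (fun i : Fin (m + k) ↦ lam (i + 1)) (fun i : Fin m ↦ mu (i + 1)) ↔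
      ∀ i, 1 ≤ i → i ≤ m → mu i ≤ lam i ∧ lam (i + k) ≤ mu i := by
  simp only [InterlacesWithGap, Fin.forall_iff, Fin.addNat_mk, Fin.castAdd_mk]
  refine ⟨fun h i hi him ↦ ?_, fun h i hi ↦ ?_⟩
  · obtain ⟨i, rfl⟩ := Nat.exists_eq_add_of_le' hi
    rw [add_right_comm]
    exact (h i him).symm
  · rw [add_right_comm]
    exact (h (i + 1) (Nat.le_add_left 1 i) hi).symm

/-- The entry `M_{ij}` of the branching matrix as a function of its column `j`, counted from `0`,
and of `u = u_{ij}`. In the columns `j < m` it is `C(u + n - m - 1, n - m - 1)` for `u ≥ 0`, written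
with `Nat.multichoose` so that for `n = m` it becomes the indicator of `u = 0`. -/
def branchingEntry (m n j : ℕ) (u : ℤ) : ℤ :=
  if j < m then if 0 ≤ u then (n - m).multichoose u.toNat else 0
  else Ring.choose (u + (n - 1 - j : ℕ)) (n - 1 - j)

/-- The matrix `M` of the branching determinant, with `0`-based row and column indices. Only the
entries of `mu` with index `< n` matter. -/
def branchingMatrix (m : ℕ) {n : ℕ} (lam : Fin n → ℤ) (mu : ℕ → ℤ) : Matrix (Fin n) (Fin n) ℤ :=
  of fun i j ↦ branchingEntry m n j (lam i - mu j + j - i)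

lemma branchingEntry_sub_pred {m n j : ℕ} (hmn : m ≤ n) (hj : j < n) (u : ℤ) :
    branchingEntry m (n + 1) j u - branchingEntry m (n + 1) j (u - 1) = branchingEntry m n j u := by
  unfold branchingEntry
  split_ifs with hjm hu hu' hu'
  · obtain ⟨v, rfl⟩ : ∃ v : ℕ, u = v + 1 := ⟨(u - 1).toNat, by lia⟩
    rw [Nat.succ_sub hmn, add_sub_cancel_right, Int.toNat_natCast, Int.toNat_natCast_add_one,
      Nat.multichoose_succ_succ]
    push_cast
    ring
  · obtain rfl : u = 0 := by lia
    simp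
  · lia
  · rfl
  · have hn : n + 1 - 1 - j = n - 1 - j + 1 := by lia
    rw [hn, Nat.cast_succ, ← add_assoc, Ring.choose_succ_succ]
    ring_nf

lemma branchingEntry_last {m n : ℕ} (hmn : m ≤ n) (u : ℤ) : branchingEntry m (n + 1) n u = 1 := by
  simp [branchingEntry, hmn.not_gt]

lemma branchingEntry_self {m j : ℕ} (hj : j < m) (u : ℤ) :
    branchingEntry m m j u = if u = 0 then 1 else 0 := by
  rw [branchingEntry, if_pos hj, Nat.sub_self]
  obtain hu | rfl | hu := lt_trichotomy u 0
  · rw [if_neg hu.not_ge, if_neg hu.ne]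
  · simp
  · obtain ⟨v, rfl⟩ : ∃ v : ℕ, u = v + 1 := ⟨(u - 1).toNat, by lia⟩
    rw [if_pos hu.le, if_neg hu.ne', Int.toNat_natCast_add_one, Nat.multichoose_zero_succ,
      Nat.cast_zero]

lemma branchingEntry_cast {m n : ℕ} (hmn : m < n) (j : ℕ) (u : ℤ) :
    (branchingEntry m n j u : ℚ) =
      if j + 1 ≤ m then
        if 0 ≤ u then ((u.toNat + (n - m - 1)).choose (n - m - 1) : ℚ) else 0
      else gchoose ((u : ℚ) + ((n - 1 - j : ℕ) : ℚ)) (n - 1 - j) := by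
  obtain ⟨k, hk⟩ : ∃ k, n - m = k + 1 := ⟨n - m - 1, by lia⟩
  have hchoose (v : ℕ) : (k + 1).multichoose v = (v + k).choose k := by
    rw [Nat.multichoose_eq, add_right_comm, add_tsub_cancel_right, add_comm,
      Nat.choose_symm_add]
  rw [branchingEntry, hk, add_tsub_cancel_right]
  simp only [Nat.succ_le_iff, hchoose]
  split_ifs
  · rfl
  · exact Int.cast_zero
  · rw [← gchoose_intCast]
    push_cast
    rfl

lemma sum_Icc_branchingEntry {m n j : ℕ} (hmn : m ≤ n) (hj : j < n) {a b : ℤ} (hab : a ≤ b)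
    (c : ℤ) :
    ∑ x ∈ Icc a b, branchingEntry m n j (x + c) =
      branchingEntry m (n + 1) j (b + c) - branchingEntry m (n + 1) j (a + c - 1) := by
  have htele := sum_Icc_int_sub_pred (fun x ↦ branchingEntry m (n + 1) j (x + c))
    (hab.trans (Int.le_add_one le_rfl))
  simpa only [sub_add_eq_add_sub, branchingEntry_sub_pred hmn hj] using htele

lemma det_branchingMatrix_succ {m n : ℕ} (hmn : m ≤ n) {lam : Fin (n + 1) → ℤ}
    (hlam : Antitone lam) (mu : ℕ → ℤ) :
    (branchingMatrix m lam mu).det =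
      ∑ nu ∈ Icc (Fin.tail lam) (Fin.init lam), (branchingMatrix m nu mu).det := by
  rw [det_eq_det_sub_succ_of_last_col_eq_one _ fun i ↦ branchingEntry_last hmn _, Pi.Icc_eq]
  refine Eq.trans ?_ (det_of_sum_eq_sum_piFinset _ fun (i : Fin n) x (j : Fin n) ↦
    branchingEntry m n j (x - mu j + j - i))
  congr 1
  ext i j
  have hsum := sum_Icc_branchingEntry hmn j.2 (hlam i.castSucc_le_succ) (-mu j + j - i)
  simp only [of_apply, branchingMatrix, Fin.tail, Fin.init, Fin.val_castSucc, Fin.val_succ]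
  convert hsum.symm using 3 <;> push_cast <;> ring

lemma det_branchingMatrix_self {m : ℕ} {lam : Fin m → ℤ} (hlam : Antitone lam) {mu : ℕ → ℤ}
    (hmu : Antitone fun j : Fin m ↦ mu j) :
    (branchingMatrix m lam mu).det = if lam = fun j : Fin m ↦ mu j then 1 else 0 := by
  have hstrict {f : Fin m → ℤ} (hf : Antitone f) : StrictMono fun i : Fin m ↦ (i : ℤ) - f i :=
    fun i j hij ↦ Int.sub_lt_sub_of_lt_of_le (Int.ofNat_lt.2 hij) (hf hij.le)
  have hentry : branchingMatrix m lam mu =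
      of fun i j : Fin m ↦ if (i : ℤ) - lam i = j - mu j then 1 else 0 := by
    ext i j
    rw [branchingMatrix, of_apply, branchingEntry_self j.2, of_apply]
    exact if_congr (by lia) rfl rfl
  rw [hentry, det_ite_eq_of_strictMono (hstrict hlam) (hstrict hmu)]
  simp only [funext_iff, sub_right_inj]

lemma det_branchingMatrix {m : ℕ} {mu : ℕ → ℤ} (hmu : Antitone fun j : Fin m ↦ mu j) (k : ℕ)
    {lam : Fin (m + k) → ℤ} (hlam : Antitone lam) :
    (branchingMatrix m lam mu).det = branchingMultiplicity (fun j : Fin m ↦ mu j) k lam := by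
  induction k with
  | zero =>
    rw [branchingMultiplicity, Nat.cast_ite, Nat.cast_one, Nat.cast_zero]
    exact det_branchingMatrix_self hlam hmu
  | succ k ih =>
    rw [branchingMultiplicity, Nat.cast_sum]
    refine (det_branchingMatrix_succ (Nat.le_add_right m k) hlam mu).trans ?_
    refine sum_congr rfl fun nu hnu ↦ ih ?_
    exact antitone_of_tail_le_of_le_init (mem_Icc.1 hnu).1 (mem_Icc.1 hnu).2

lemma cast_det_branchingMatrix {n m : ℕ} (hm : m < n) (lam mu : ℕ → ℤ) :
    ((branchingMatrix m (fun i : Fin n ↦ lam (i + 1)) fun j ↦ mu (j + 1)).det : ℚ) =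
      Matrix.det (Matrix.of fun i j : Fin n =>
        if (j : ℕ) + 1 ≤ m then
          (if 0 ≤ uent lam mu ((i : ℕ) + 1) ((j : ℕ) + 1) then
            (((uent lam mu ((i : ℕ) + 1) ((j : ℕ) + 1)).toNat + (n - m - 1)).choose
              (n - m - 1) : ℚ)
          else 0)
        else
          gchoose (((uent lam mu ((i : ℕ) + 1) ((j : ℕ) + 1) : ℤ) : ℚ) +
            ((n - 1 - (j : ℕ) : ℕ) : ℚ)) (n - 1 - (j : ℕ))) := by
  rw [Int.cast_det]
  congr 1
  ext i j
  have huent : uent lam mu (i + 1) (j + 1) = lam (i + 1) - mu (j + 1) + j - i := by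
    rw [uent]
    lia
  simp only [map_apply, of_apply, branchingMatrix, branchingEntry_cast hm, huent]

lemma antitone_fin_of_forall_succ_le {α : Type*} [Preorder α] {n : ℕ} {f : ℕ → α}
    (hf : ∀ i, 1 ≤ i → i < n → f (i + 1) ≤ f i) : Antitone fun i : Fin n ↦ f (i + 1) := by
  cases n with
  | zero => exact Subsingleton.antitone _
  | succ n => exact Fin.antitone_iff_succ_le.2 fun i ↦ hf _ (Nat.le_add_left 1 i) (by simp)

theorem gl_branching_det_ne_zero_iff_general (n m : ℕ) (hm : m < n) (lam mu : ℕ → ℤ)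
    (hlam_dec : ∀ i, 1 ≤ i → i < n → lam (i + 1) ≤ lam i)
    (hmu_dec : ∀ i, 1 ≤ i → i < m → mu (i + 1) ≤ mu i) :
    Matrix.det (Matrix.of fun i j : Fin n =>
        if (j : ℕ) + 1 ≤ m then
          (if 0 ≤ uent lam mu ((i : ℕ) + 1) ((j : ℕ) + 1) then
            (((uent lam mu ((i : ℕ) + 1) ((j : ℕ) + 1)).toNat + (n - m - 1)).choose
              (n - m - 1) : ℚ)
          else 0)
        else
          gchoose (((uent lam mu ((i : ℕ) + 1) ((j : ℕ) + 1) : ℤ) : ℚ) +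
            ((n - 1 - (j : ℕ) : ℕ) : ℚ)) (n - 1 - (j : ℕ))) ≠ 0 ↔
    ∀ i, 1 ≤ i → i ≤ m → mu i ≤ lam i ∧ lam (i + n - m) ≤ mu i := by
  rw [← cast_det_branchingMatrix hm, Int.cast_ne_zero]
  obtain ⟨k, rfl⟩ := Nat.exists_eq_add_of_le hm.le
  have hshift (i : ℕ) : i + (m + k) - m = i + k := by lia
  have hlam := antitone_fin_of_forall_succ_le hlam_dec
  have hmu := antitone_fin_of_forall_succ_le hmu_dec
  rw [det_branchingMatrix hmu k hlam, Nat.cast_ne_zero, ← Nat.pos_iff_ne_zero,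
    branchingMultiplicity_pos_iff hmu k hlam, interlacesWithGap_iff_forall_one_le]
  simp only [hshift]

/-- Interlacing criterion for the nonvanishing of the branching determinant for
`GL(m) ⊂ GL(n)`. -/
theorem gl_branching_det_ne_zero_iff (n m : ℕ) (hm : m < n) (lam mu : ℕ → ℤ)
    (hlam_dec : ∀ i, 1 ≤ i → i < n → lam (i + 1) ≤ lam i)
    (hlam_nonneg : 0 ≤ lam n)
    (hlam_zero : ∀ i, n < i → lam i = 0)
    (hmu_dec : ∀ i, 1 ≤ i → i < m → mu (i + 1) ≤ mu i)
    (hmu_nonneg : 0 ≤ mu m)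
    (hmu_zero : ∀ i, m < i → mu i = 0) :
    Matrix.det (Matrix.of fun i j : Fin n =>
        if (j : ℕ) + 1 ≤ m then
          (if 0 ≤ uent lam mu ((i : ℕ) + 1) ((j : ℕ) + 1) then
            (((uent lam mu ((i : ℕ) + 1) ((j : ℕ) + 1)).toNat + (n - m - 1)).choose
              (n - m - 1) : ℚ)
          else 0)
        else
          gchoose (((uent lam mu ((i : ℕ) + 1) ((j : ℕ) + 1) : ℤ) : ℚ) +
            ((n - 1 - (j : ℕ) : ℕ) : ℚ)) (n - 1 - (j : ℕ))) ≠ 0 ↔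
    ∀ i, 1 ≤ i → i ≤ m → mu i ≤ lam i ∧ lam (i + n - m) ≤ mu i :=
  gl_branching_det_ne_zero_iff_general n m hm lam mu hlam_dec hmu_dec
end
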